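/- Let k ≥ 2, n1, n2 ≥ 1, and let x be a real number with x > λ(D_{k−1}). Set α = u_{k−1}^T (xI − D_{k−1})^{−1} u_{k−1}, β = u_{k−1}^T (xI − D_{k−1})^{−1} w_{k−1}, and γ = (1/2)(u_{k−1} − w_{k−1})^T (xI − D_{k−1})^{−1} (u_{k−1} − w_{k−1}). Then det(xI_{k+1} − B(n1,k,n2)) = [ (x+1)² − (n1+n2)(1+α)(x+1) + n1·n2·(1+α+k+β)(1−k+γ) ] · det(xI_{k−1} − D_{k−1}). -/

import Mathlib

open Matrix

noncomputable section

/-- Distance matrix of the path on `m` vertices: entry `(i,j)` is `|i - j|`. -/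
def pathD (m : ℕ) : Matrix (Fin m) (Fin m) ℝ := fun i j => |(i : ℝ) - (j : ℝ)|

/-- The vector `(1, 2, …, m)ᵀ`. -/
def uVec (m : ℕ) : Fin m → ℝ := fun i => (i : ℝ) + 1

/-- The reversed vector `(m, m-1, …, 1)ᵀ`. -/
def wVec (m : ℕ) : Fin m → ℝ := fun i => (m : ℝ) - (i : ℝ)

/-- Largest real eigenvalue of a matrix. -/
def maxEig {ι : Type} [Fintype ι] (A : Matrix ι ι ℝ) : ℝ :=
  sSup {μ : ℝ | ∃ v : ι → ℝ, v ≠ 0 ∧ A.mulVec v = μ • v}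

/-- The quotient matrix `B(n1,k,n2)` of the clique path distance matrix. -/
def quotB (n1 k n2 : ℕ) :
    Matrix (Unit ⊕ Fin (k - 1) ⊕ Unit) (Unit ⊕ Fin (k - 1) ⊕ Unit) ℝ :=
  fun p q =>
    match p, q with
    | Sum.inl _, Sum.inl _ => (n1 : ℝ) - 1
    | Sum.inl _, Sum.inr (Sum.inl j) => uVec (k - 1) j
    | Sum.inl _, Sum.inr (Sum.inr _) => (k : ℝ) * n2
    | Sum.inr (Sum.inl i), Sum.inl _ => (n1 : ℝ) * uVec (k - 1) i
    | Sum.inr (Sum.inl i), Sum.inr (Sum.inl j) => pathD (k - 1) i j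
    | Sum.inr (Sum.inl i), Sum.inr (Sum.inr _) => (n2 : ℝ) * wVec (k - 1) i
    | Sum.inr (Sum.inr _), Sum.inl _ => (k : ℝ) * n1
    | Sum.inr (Sum.inr _), Sum.inr (Sum.inl j) => wVec (k - 1) j
    | Sum.inr (Sum.inr _), Sum.inr (Sum.inr _) => (n2 : ℝ) - 1

theorem pathD_isUnit_det (m : ℕ) (x : ℝ) (hx : maxEig (pathD m) < x) :
    IsUnit (x • (1 : Matrix (Fin m) (Fin m) ℝ) - pathD m).det := by
  rw [isUnit_iff_ne_zero]
  intro h0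
  obtain ⟨v, hv, hv'⟩ := Matrix.exists_mulVec_eq_zero_iff.mpr h0
  have hmem : x ∈ {μ : ℝ | ∃ v : Fin m → ℝ, v ≠ 0 ∧ (pathD m).mulVec v = μ • v} := by
    refine ⟨v, hv, ?_⟩
    rw [Matrix.sub_mulVec, Matrix.smul_mulVec, Matrix.one_mulVec, sub_eq_zero] at hv'
    exact hv'.symm
  have hbdd : BddAbove {μ : ℝ | ∃ v : Fin m → ℝ, v ≠ 0 ∧ (pathD m).mulVec v = μ • v} := by
    apply Set.Finite.bddAbove
    refine (Module.End.finite_hasEigenvalue (Matrix.toLin' (pathD m))).subset ?_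
    rintro μ ⟨v, hv, h⟩
    refine Module.End.hasEigenvalue_of_hasEigenvector (x := v) ⟨?_, hv⟩
    rw [Module.End.mem_eigenspace_iff, Matrix.toLin'_apply, h]
  exact absurd (le_csSup hbdd hmem) (not_le.mpr hx)

theorem pathD_transpose (m : ℕ) (x : ℝ) :
    (x • (1 : Matrix (Fin m) (Fin m) ℝ) - pathD m)ᵀ = x • 1 - pathD m := by
  rw [Matrix.transpose_sub, Matrix.transpose_smul, Matrix.transpose_one]
  congr 1
  ext i j
  simp [pathD, abs_sub_comm]

theorem pathD_rev (m : ℕ) (x : ℝ) :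
    (x • (1 : Matrix (Fin m) (Fin m) ℝ) - pathD m).submatrix Fin.revPerm Fin.revPerm
      = x • 1 - pathD m := by
  ext i j
  have e : ∀ i : Fin m, ((Fin.rev i : Fin m) : ℝ) = m - 1 - i := by
    intro i
    have := i.2
    rw [Fin.val_rev, Nat.cast_sub (by omega)]
    push_cast; ring
  simp only [Matrix.submatrix_apply, Matrix.sub_apply, Matrix.smul_apply, Matrix.one_apply,
    Fin.revPerm_apply, Fin.rev_inj, pathD, e]
  congr 1
  rw [abs_sub_comm]
  congr 1
  ring

theorem wVec_rev (m : ℕ) (i : Fin m) : wVec m (Fin.rev i) = uVec m i := by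
  have := i.2
  simp only [wVec, uVec, Fin.val_rev]
  rw [Nat.cast_sub (by omega)]
  push_cast; ring

/-- The reordering of the index set which puts the path vertices first. -/
def reordEquiv (m : ℕ) : Fin m ⊕ Fin 2 ≃ Unit ⊕ Fin m ⊕ Unit where
  toFun p := match p with
    | Sum.inl i => Sum.inr (Sum.inl i)
    | Sum.inr 0 => Sum.inl ()
    | Sum.inr 1 => Sum.inr (Sum.inr ())
  invFun p := match p with
    | Sum.inl _ => Sum.inr 0
    | Sum.inr (Sum.inl i) => Sum.inl i
    | Sum.inr (Sum.inr _) => Sum.inr 1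
  left_inv p := by
    rcases p with i | i
    · rfl
    · fin_cases i <;> rfl
  right_inv p := by
    rcases p with i | i | i <;> rfl

/-- Factorization of the characteristic polynomial of the quotient matrix `B(n1,k,n2)`:
for `x > λ(D_{k-1})`,
`det(xI − B) = [(x+1)² − (n1+n2)(1+α)(x+1) + n1·n2·(1+α+k+β)(1−k+γ)] · det(xI − D_{k-1})`. -/
theorem det_quotB_factorization
    (k n1 n2 : ℕ) (hk : 2 ≤ k) (hn1 : 1 ≤ n1) (hn2 : 1 ≤ n2)
    (x : ℝ) (hx : maxEig (pathD (k - 1)) < x)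
    (α β γ : ℝ)
    (hα : α = uVec (k - 1) ⬝ᵥ
        ((x • (1 : Matrix (Fin (k - 1)) (Fin (k - 1)) ℝ) - pathD (k - 1))⁻¹).mulVec
          (uVec (k - 1)))
    (hβ : β = uVec (k - 1) ⬝ᵥ
        ((x • (1 : Matrix (Fin (k - 1)) (Fin (k - 1)) ℝ) - pathD (k - 1))⁻¹).mulVec
          (wVec (k - 1)))
    (hγ : γ = (1 / 2) *
        ((uVec (k - 1) - wVec (k - 1)) ⬝ᵥ
          ((x • (1 : Matrix (Fin (k - 1)) (Fin (k - 1)) ℝ) - pathD (k - 1))⁻¹).mulVec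
            (uVec (k - 1) - wVec (k - 1)))) :
    (x • (1 : Matrix (Unit ⊕ Fin (k - 1) ⊕ Unit) (Unit ⊕ Fin (k - 1) ⊕ Unit) ℝ)
        - quotB n1 k n2).det =
      ((x + 1) ^ 2 - ((n1 : ℝ) + n2) * (1 + α) * (x + 1)
          + (n1 : ℝ) * n2 * (1 + α + k + β) * (1 - k + γ)) *
        (x • (1 : Matrix (Fin (k - 1)) (Fin (k - 1)) ℝ) - pathD (k - 1)).det := by
  have hU := pathD_isUnit_det (k - 1) x hx
  have hT := pathD_transpose (k - 1) x
  have hR := pathD_rev (k - 1) x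
  have hW := wVec_rev (k - 1)
  set u := uVec (k - 1) with hu
  set w := wVec (k - 1) with hw
  set M := x • (1 : Matrix (Fin (k - 1)) (Fin (k - 1)) ℝ) - pathD (k - 1) with hM
  have hTi : (M⁻¹)ᵀ = M⁻¹ := by rw [Matrix.transpose_nonsing_inv, hT]
  have hRi : (M⁻¹).submatrix Fin.revPerm Fin.revPerm = M⁻¹ := by
    rw [← Matrix.inv_submatrix_equiv, hR]
  have hwu : w ⬝ᵥ M⁻¹ *ᵥ u = β := by
    rw [hβ, Matrix.dotProduct_mulVec, dotProduct_comm, ← Matrix.mulVec_transpose, hTi]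
  have hww : w ⬝ᵥ M⁻¹ *ᵥ w = α := by
    rw [hα]
    simp only [dotProduct, Matrix.mulVec]
    rw [← Equiv.sum_comp Fin.revPerm]
    refine Finset.sum_congr rfl fun i _ => ?_
    rw [Fin.revPerm_apply, hW]
    congr 1
    rw [← Equiv.sum_comp Fin.revPerm]
    refine Finset.sum_congr rfl fun j _ => ?_
    rw [Fin.revPerm_apply, hW]
    congr 1
    exact congrFun (congrFun hRi i) j
  have hγ' : γ = α - β := by
    rw [hγ, Matrix.mulVec_sub, dotProduct_sub, sub_dotProduct, sub_dotProduct, hwu, hww, ← hα, ← hβ]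
    ring
  rw [← Matrix.det_submatrix_equiv_self (reordEquiv (k - 1))]
  have hblk : (x • (1 : Matrix (Unit ⊕ Fin (k - 1) ⊕ Unit) (Unit ⊕ Fin (k - 1) ⊕ Unit) ℝ)
        - quotB n1 k n2).submatrix (reordEquiv (k - 1)) (reordEquiv (k - 1)) =
      Matrix.fromBlocks M (Matrix.of fun i j => -(![(n1 : ℝ) * u i, (n2 : ℝ) * w i] j))
        (Matrix.of fun i j => -(![u j, w j] i))
        !![x - (n1 - 1), -(k * n2); -(k * n1), x - (n2 - 1)] := by
    ext p q
    rcases p with i | i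
    · rcases q with j | j
      · simp [reordEquiv, quotB, hM, Matrix.one_apply]
      · fin_cases j <;> simp [reordEquiv, quotB, Matrix.one_apply, hu, hw]
    · rcases q with j | j
      · fin_cases i <;> simp [reordEquiv, quotB, Matrix.one_apply, hu, hw]
      · fin_cases i <;> fin_cases j <;> simp [reordEquiv, quotB, Matrix.one_apply]
  rw [hblk]
  letI := Matrix.invertibleOfIsUnitDet M hU
  rw [Matrix.det_fromBlocks₁₁, Matrix.invOf_eq_nonsing_inv, mul_comm]
  congr 1
  have key : ∀ (a b : Fin (k - 1) → ℝ) (c : ℝ),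
      ∑ j, (∑ i, -a i * M⁻¹ i j) * -(c * b j) = c * (a ⬝ᵥ M⁻¹ *ᵥ b) := by
    intro a b c
    rw [Matrix.dotProduct_mulVec, dotProduct, Finset.mul_sum]
    refine Finset.sum_congr rfl fun j _ => ?_
    simp only [Matrix.vecMul, dotProduct, neg_mul, Finset.sum_neg_distrib]
    ring
  rw [Matrix.det_fin_two]
  simp only [Matrix.sub_apply, Matrix.mul_apply, Matrix.of_apply, Matrix.cons_val_zero,
    Matrix.cons_val_one, key, hwu, hww, ← hα, ← hβ]
  rw [hγ']
  ring
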